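/- Assume c_k ≥ 0 for all k = 1, …, K. Then for every bounded measurable ω-periodic function η₀ : ℝ → ℝ, every t > 0 and every x ∈ ℝ, (S(t)η₀)(x) ≥ (inf_{y∈ℝ} η₀(y)) · e^{−αt} − A (1 − e^{−αt})/α; i.e. the mild solution dominates the spatially constant ODE subsolution ξ(t) = A(e^{−αt} − 1)/α + (inf η₀) e^{−αt}. -/

import Mathlib

open Real MeasureTheory Filter Topology intervalIntegral

/-- One-dimensional Gauss (heat) kernel `G_t(x) = (4πt)^{−1/2} exp(−x²/(4t))`. -/
noncomputable def heatKernel (t x : ℝ) : ℝ :=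
  (4 * Real.pi * t) ^ (-(1 : ℝ) / 2) * Real.exp (-x ^ 2 / (4 * t))

/-- The `ω`-periodized heat kernel `Ĝ_t(x) = Σ_{j ∈ ℤ} G_t(x − jω)`. -/
noncomputable def perHeatKernel (ω t x : ℝ) : ℝ :=
  ∑' j : ℤ, heatKernel t (x - (j : ℝ) * ω)

/-- Mild solution of `η_t = σ η_xx − α η + Σ_{k} c_k δ(x − a_k) − A` with initial data `η₀`:
`(S(t)η₀)(x) = e^{−αt} ∫ G_{σt}(x − y) η₀(y) dy
  + Σ_k c_k ∫₀^t e^{−ατ} Ĝ_{στ}(x − a_k) dτ − A(1 − e^{−αt})/α` for `t > 0`,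
and `S(0)η₀ = η₀`. -/
noncomputable def mildSol (ω σ α A : ℝ) {K : ℕ} (a c : Fin K → ℝ)
    (η₀ : ℝ → ℝ) (t x : ℝ) : ℝ :=
  if t = 0 then η₀ x else
    Real.exp (-(α * t)) * (∫ y : ℝ, heatKernel (σ * t) (x - y) * η₀ y)
      + (∑ k : Fin K, c k * ∫ τ in (0:ℝ)..t,
          Real.exp (-(α * τ)) * perHeatKernel ω (σ * τ) (x - a k))
      - A * (1 - Real.exp (-(α * t))) / α

/-- Rupture time for the threshold `η_c`:
`t_r(η₀) = sup{ t ≥ 0 : inf_x (S(t)η₀)(x) > η_c }`. -/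
noncomputable def ruptureTime (ω σ α A : ℝ) {K : ℕ} (a c : Fin K → ℝ)
    (ηc : ℝ) (η₀ : ℝ → ℝ) : ℝ :=
  sSup {t : ℝ | 0 ≤ t ∧ ηc < ⨅ x : ℝ, mildSol ω σ α A a c η₀ t x}

/-- The heat kernel is nonnegative for nonnegative time. -/
theorem heatKernel_nonneg {t : ℝ} (ht : 0 ≤ t) (x : ℝ) : 0 ≤ heatKernel t x := by
  unfold heatKernel
  positivity

theorem heatKernel_eq (t : ℝ) :
    heatKernel t = fun x => (4 * π * t) ^ (-(1 : ℝ) / 2) * exp (-(1 / (4 * t)) * x ^ 2) := by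
  funext x
  unfold heatKernel
  congr 2
  ring

theorem integrable_heatKernel {t : ℝ} (ht : 0 < t) : Integrable (heatKernel t) := by
  rw [heatKernel_eq]
  exact (integrable_exp_neg_mul_sq (by positivity)).const_mul _

/-- The heat kernel has unit mass. -/
theorem integral_heatKernel {t : ℝ} (ht : 0 < t) : ∫ x, heatKernel t x = 1 := by
  have hpos : 0 < 4 * π * t := by positivity
  have hdiv : π / (1 / (4 * t)) = 4 * π * t := by
    field_simp
  rw [heatKernel_eq, MeasureTheory.integral_const_mul, integral_gaussian, hdiv, sqrt_eq_rpow,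
    ← rpow_add hpos]
  norm_num

/-- The periodized heat kernel is nonnegative for nonnegative time. -/
theorem perHeatKernel_nonneg (ω : ℝ) {t : ℝ} (ht : 0 ≤ t) (x : ℝ) : 0 ≤ perHeatKernel ω t x :=
  tsum_nonneg fun _ => heatKernel_nonneg ht _

/-- Convolution with the heat kernel preserves lower bounds of bounded measurable functions. -/
theorem le_integral_heatKernel_mul {t m M : ℝ} (ht : 0 < t) {f : ℝ → ℝ} (hf : Measurable f)
    (hM : ∀ x, |f x| ≤ M) (hm : ∀ x, m ≤ f x) (x : ℝ) :
    m ≤ ∫ y, heatKernel t (x - y) * f y := by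
  have hint : Integrable fun y => heatKernel t (x - y) := (integrable_heatKernel ht).comp_sub_left x
  calc m = ∫ y, heatKernel t (x - y) * m := by
        rw [MeasureTheory.integral_mul_const, integral_sub_left_eq_self (heatKernel t) volume x,
          integral_heatKernel ht, one_mul]
    _ ≤ ∫ y, heatKernel t (x - y) * f y :=
        MeasureTheory.integral_mono (hint.mul_const m)
          (hint.mul_bdd hf.aestronglyMeasurable (ae_of_all _ hM))
          fun y => mul_le_mul_of_nonneg_left (hm y) (heatKernel_nonneg ht.le _)

/-- If `c_k ≥ 0` for all `k`, the mild solution dominates the spatially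
constant ODE subsolution: `(S(t)η₀)(x) ≥ (inf η₀) e^{−αt} − A(1 − e^{−αt})/α`. -/
theorem mildSol_ge_ode_subsolution (ω σ α A : ℝ) (K : ℕ) (a c : Fin K → ℝ)
    (hω : 0 < ω) (hσ : 0 < σ) (hα : 0 < α)
    (ha0 : ∀ k, 0 ≤ a k) (haω : ∀ k, a k < ω) (hamono : StrictMono a)
    (hc : ∀ k, 0 ≤ c k) :
    ∀ η₀ : ℝ → ℝ, Measurable η₀ → (∃ M, ∀ x, |η₀ x| ≤ M) →
      (∀ x, η₀ (x + ω) = η₀ x) →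
      ∀ t : ℝ, 0 < t → ∀ x : ℝ,
        (⨅ y : ℝ, η₀ y) * Real.exp (-(α * t))
            - A * (1 - Real.exp (-(α * t))) / α ≤
          mildSol ω σ α A a c η₀ t x := by
  rintro η₀ hη ⟨M, hM⟩ - t ht x
  have hbdd : BddBelow (Set.range η₀) :=
    ⟨-M, Set.forall_mem_range.2 fun y => (abs_le.1 (hM y)).1⟩
  have hinit : (⨅ y, η₀ y) ≤ ∫ y, heatKernel (σ * t) (x - y) * η₀ y :=
    le_integral_heatKernel_mul (mul_pos hσ ht) hη hM (ciInf_le hbdd) x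
  have hsource : 0 ≤ ∑ k : Fin K, c k * ∫ τ in (0:ℝ)..t,
      Real.exp (-(α * τ)) * perHeatKernel ω (σ * τ) (x - a k) :=
    Finset.sum_nonneg fun k _ => mul_nonneg (hc k) <|
      intervalIntegral.integral_nonneg ht.le fun τ hτ =>
        mul_nonneg (exp_pos _).le (perHeatKernel_nonneg ω (mul_nonneg hσ.le hτ.1) _)
  have hdecay := mul_le_mul_of_nonneg_left hinit (exp_pos (-(α * t))).le
  rw [mildSol, if_neg ht.ne']
  linarith
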